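/- Let T and T* be finite trees, each with at least 3 vertices, let v be a vertex of T that is not a leaf, and let v* be a vertex of T* that is not a leaf. Then the set R = (L(T) × {v*}) ∪ ({v} × L(T*)) is a maximal general position set of T □ T*; that is, R is a general position set and no set properly containing R is a general position set of T □ T*. -/

import Mathlib

open SimpleGraph

/-- A set `S` of vertices of `G` is a general position set if for every three
pairwise-distinct vertices `x, y, z ∈ S` one has `d(x,y) ≠ d(x,z) + d(z,y)`. -/
def IsGenPosSet {V : Type*} (G : SimpleGraph V) (S : Set V) : Prop :=
  ∀ x ∈ S, ∀ y ∈ S, ∀ z ∈ S, x ≠ y → x ≠ z → y ≠ z →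
    G.dist x y ≠ G.dist x z + G.dist z y

/-- The general position number of a graph on a finite vertex type: the
cardinality of a largest general position set. -/
noncomputable def genPosNum {V : Type*} [Fintype V] (G : SimpleGraph V) : ℕ :=
  sSup {n | ∃ S : Finset V, IsGenPosSet G ↑S ∧ S.card = n}

/-- A vertex is a leaf if it has exactly one neighbour (degree 1). -/
def IsLeaf {V : Type*} (G : SimpleGraph V) (v : V) : Prop :=
  ∃! w, G.Adj v w

theorem dist_boxProd_of_connected {V W : Type*} {G : SimpleGraph V} {H : SimpleGraph W}
    (hG : G.Connected) (hH : H.Connected) (x y : V × W) :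
    (G □ H).dist x y = G.dist x.1 y.1 + H.dist x.2 y.2 := by
  have h := edist_boxProd (G := G) (H := H) x y
  rw [← ((hG.boxProd hH).preconnected x y).coe_dist_eq_edist,
    ← (hG.preconnected x.1 y.1).coe_dist_eq_edist,
    ← (hH.preconnected x.2 y.2).coe_dist_eq_edist] at h
  exact_mod_cast h

/-- The unique neighbour of a leaf is one step closer to every other vertex. -/
theorem dist_eq_dist_add_one_of_unique_adj {V : Type*} {G : SimpleGraph V} (hG : G.Connected)
    {l w x : V} (hw : ∀ u, G.Adj l u → u = w) (hx : x ≠ l) :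
    G.dist l x = G.dist w x + 1 := by
  obtain ⟨p, hp⟩ := hG.exists_walk_length_eq_dist l x
  cases p with
  | nil => exact absurd rfl hx
  | @cons _ u _ h q =>
    obtain rfl := hw _ h
    have hq := dist_le q
    have htri := hG.dist_triangle (u := l) (v := u) (w := x)
    rw [dist_eq_one_iff_adj.mpr h] at htri
    simp only [Walk.length_cons] at hp
    omega

theorem IsLeaf.dist_lt_dist_add_dist {V : Type*} {G : SimpleGraph V} (hG : G.Connected)
    {l x y : V} (hl : IsLeaf G l) (hx : x ≠ l) (hy : y ≠ l) :
    G.dist x y < G.dist x l + G.dist l y := by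
  obtain ⟨w, -, hw⟩ := hl
  have hxw := dist_eq_dist_add_one_of_unique_adj hG hw hx
  have hyw := dist_eq_dist_add_one_of_unique_adj hG hw hy
  have htri := hG.dist_triangle (u := x) (v := w) (w := y)
  rw [dist_comm (u := l), dist_comm (u := w)] at hxw
  omega

theorem SimpleGraph.IsTree.eq_of_adj_of_dist_add_one_eq {V : Type*} {G : SimpleGraph V} (hG : G.IsTree)
    {v l a b : V} (ha : G.Adj a l) (hb : G.Adj b l)
    (hda : G.dist v a + 1 = G.dist v l) (hdb : G.dist v b + 1 = G.dist v l) : a = b := by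
  obtain ⟨p, hp⟩ := hG.connected.exists_walk_length_eq_dist v a
  obtain ⟨q, hq⟩ := hG.connected.exists_walk_length_eq_dist v b
  have hp' : (p.concat ha).IsPath :=
    Walk.isPath_of_length_eq_dist _ (by rw [Walk.length_concat, hp, hda])
  have hq' : (q.concat hb).IsPath :=
    Walk.isPath_of_length_eq_dist _ (by rw [Walk.length_concat, hq, hdb])
  have h := congrArg Walk.penultimate ((hG.existsUnique_path v l).unique hp' hq')
  simpa using h

/-- In a finite nontrivial tree, a geodesic from `v` to `a` extends to one ending at a leaf. -/
theorem SimpleGraph.IsTree.exists_isLeaf_dist_eq {V : Type*} [Finite V] [Nontrivial V]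
    {G : SimpleGraph V} (hG : G.IsTree) (v a : V) :
    ∃ l, IsLeaf G l ∧ G.dist v l = G.dist v a + G.dist a l := by
  obtain ⟨l, hl, hmax⟩ := Set.exists_max_image {l | G.dist v l = G.dist v a + G.dist a l}
    (G.dist v) (Set.toFinite _) ⟨a, by simp⟩
  have hcloser : ∀ w, G.Adj l w → G.dist v w + 1 = G.dist v l := by
    intro w hw
    rcases hG.dist_eq_dist_add_one_of_adj v hw with h | h
    · exact h.symm
    · have hvw := hG.connected.dist_triangle (u := v) (v := a) (w := w)
      have haw := hG.connected.dist_triangle (u := a) (v := l) (w := w)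
      rw [dist_eq_one_iff_adj.mpr hw] at haw
      have hl' : G.dist v l = G.dist v a + G.dist a l := hl
      have := hmax w (show G.dist v w = G.dist v a + G.dist a w by omega)
      omega
  obtain ⟨w, hw⟩ := hG.connected.preconnected.exists_adj_of_nontrivial l
  exact ⟨l, ⟨w, hw, fun u hu => hG.eq_of_adj_of_dist_add_one_eq hu.symm hw.symm
    (hcloser u hu) (hcloser w hw)⟩, hl⟩

/-- For trees `T, T*` on at least 3 vertices, a non-leaf `v` of `T` and a
non-leaf `v*` of `T*`, the set `(L(T) × {v*}) ∪ ({v} × L(T*))` is a maximal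
general position set of `T □ T*`. -/
theorem maximal_genPos_leaves_cross {V W : Type*} [Fintype V] [Fintype W]
    (T : SimpleGraph V) (T' : SimpleGraph W)
    (hT : T.IsTree) (hT' : T'.IsTree)
    (hV : 3 ≤ Fintype.card V) (hW : 3 ≤ Fintype.card W)
    (v : V) (hv : ¬ IsLeaf T v) (v' : W) (hv' : ¬ IsLeaf T' v') :
    IsGenPosSet (T □ T')
      (({x : V | IsLeaf T x} ×ˢ {v'}) ∪ ({v} ×ˢ {y : W | IsLeaf T' y})) ∧
    ∀ S : Set (V × W),
      (({x : V | IsLeaf T x} ×ˢ {v'}) ∪ ({v} ×ˢ {y : W | IsLeaf T' y})) ⊂ S →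
      ¬ IsGenPosSet (T □ T') S := by
  have : Nontrivial V := Fintype.one_lt_card_iff_nontrivial.mp (by omega)
  have : Nontrivial W := Fintype.one_lt_card_iff_nontrivial.mp (by omega)
  have hc := hT.connected
  have hc' := hT'.connected
  constructor
  · intro x hx y hy z hz _ hxz hyz h
    simp only [dist_boxProd_of_connected hc hc'] at h
    have h₁ := hc.dist_triangle (u := x.1) (v := z.1) (w := y.1)
    have h₂ := hc'.dist_triangle (u := x.2) (v := z.2) (w := y.2)
    obtain ⟨x₁, x₂⟩ := x
    obtain ⟨y₁, y₂⟩ := y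
    obtain ⟨z₁, z₂⟩ := z
    simp only [Set.mem_union, Set.mem_prod, Set.mem_ofPred_eq, Set.mem_singleton_iff] at hx hy hz
    rcases hz with ⟨hz, rfl⟩ | ⟨rfl, hz⟩
    · have hx₁ : x₁ ≠ z₁ := by grind
      have hy₁ : y₁ ≠ z₁ := by grind
      have := hz.dist_lt_dist_add_dist hc hx₁ hy₁
      simp only at h h₁ h₂
      omega
    · have hx₂ : x₂ ≠ z₂ := by grind
      have hy₂ : y₂ ≠ z₂ := by grind
      have := hz.dist_lt_dist_add_dist hc' hx₂ hy₂
      simp only at h h₁ h₂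
      omega
  · intro S hS hgen
    obtain ⟨hsub, ⟨a, b⟩, habS, hab⟩ := Set.ssubset_iff_exists.mp hS
    obtain ⟨l, hl, hdl⟩ := hT.exists_isLeaf_dist_eq v a
    obtain ⟨m, hm, hdm⟩ := hT'.exists_isLeaf_dist_eq v' b
    have hlR : (l, v') ∈ ({x : V | IsLeaf T x} ×ˢ {v'}) ∪ ({v} ×ˢ {y : W | IsLeaf T' y}) :=
      Or.inl ⟨hl, rfl⟩
    have hmR : (v, m) ∈ ({x : V | IsLeaf T x} ×ˢ {v'}) ∪ ({v} ×ˢ {y : W | IsLeaf T' y}) :=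
      Or.inr ⟨rfl, hm⟩
    refine hgen _ (hsub hlR) _ (hsub hmR) _ habS ?_ (ne_of_mem_of_not_mem hlR hab)
      (ne_of_mem_of_not_mem hmR hab) ?_
    · intro h
      obtain rfl : l = v := congrArg Prod.fst h
      exact hv hl
    · simp only [dist_boxProd_of_connected hc hc']
      rw [dist_comm (u := l) (v := v), dist_comm (u := l) (v := a),
        dist_comm (u := a) (v := v), hdl, hdm]
      omega
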